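/- arXiv:1812.03255 — 6 statements merged into one kernel-verified Lean document; each statement's English description precedes it below -/
import Mathlib

section
/- Let R be an associative unital ring (not necessarily commutative) that is finitely generated as a module over its center. If P is a finitely generated projective left R-module such that P ⊕ R^n is isomorphic to R^n as left R-modules for some n ≥ 0, then P = 0. -/
/-!
A ring that is finitely generated as a module over its center inherits the Orzech property from
the center, because its finitely generated modules are also finitely generated over the center,
and commutative rings have the property. If `P ⊕ N` embeds into a finitely generated module `N`
over a ring with the Orzech property, then the projection `P ⊕ N → N` is injective, so its
kernel `P` vanishes.
-/

theorem orzechProperty_of_finite (A R : Type*) [Semiring A] [OrzechProperty A] [Semiring R]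
    [Module A R] [IsScalarTower A R R] [Module.Finite A R] : OrzechProperty R where
  injective_of_surjective_of_submodule' {M} _ _ _ {N} f hf := by
    let : Module A M := Module.compHom M (RingHom.smulOneHom (R := A) (S := R))
    have : IsScalarTower A R M := ⟨fun a r m ↦ by
      change (a • r) • m = (a • (1 : R)) • r • m
      rw [smul_smul, smul_one_mul]⟩
    have : Module.Finite A M := .trans R M
    exact OrzechProperty.injective_of_surjective_of_injective
      (N.subtype.restrictScalars A) (f.restrictScalars A) N.injective_subtype hf

theorem projective_eq_zero_of_sum_free_equiv_free_of_finite_over_center_general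
    {R P N : Type*} [Semiring R] [OrzechProperty R]
    [AddCommMonoid P] [Module R P] [AddCommMonoid N] [Module R N] [Module.Finite R N]
    (f : (P × N) →ₗ[R] N) (hf : Function.Injective f) : Subsingleton P := by
  have snd_injective : Function.Injective (LinearMap.snd R P N) :=
    OrzechProperty.injective_of_surjective_of_injective f _ hf LinearMap.snd_surjective
  exact ⟨fun p q ↦ congrArg Prod.fst (snd_injective (a₁ := (p, 0)) (a₂ := (q, 0)) rfl)⟩

/-- Let `R` be an associative unital ring (not necessarily commutative)
that is finitely generated as a module over its center.  If `P` is a finitely generated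
projective left `R`-module such that `P ⊕ Rⁿ` is isomorphic to `Rⁿ` as left `R`-modules
for some `n ≥ 0`, then `P = 0`. -/
theorem projective_eq_zero_of_sum_free_equiv_free_of_finite_over_center
    (R : Type*) [Ring R]
    (hR : Module.Finite (Subring.center R) R)
    (P : Type*) [AddCommGroup P] [Module R P]
    (hPfg : Module.Finite R P) (hPproj : Module.Projective R P)
    (n : ℕ) (e : (P × (Fin n → R)) ≃ₗ[R] (Fin n → R)) :
    Subsingleton P := by
  have : OrzechProperty R := orzechProperty_of_finite (Subring.center R) R
  exact projective_eq_zero_of_sum_free_equiv_free_of_finite_over_center_general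
    e.toLinearMap e.injective
end

section
/- Let R be an associative unital ring (not necessarily commutative) that is finitely generated as a module over its center. Then R is stably finite: for every n ≥ 1 and all n×n matrices A, B with entries in R, if A·B = 1 (the identity matrix) then B·A = 1. -/
/-! Commutative rings have the Orzech property, and so does every ring `R` that is finitely
generated as a left module over a ring `K` with that property, since a finitely generated
`R`-module is then finitely generated over `K`. In particular, surjective endomorphisms of finitely
generated left `R`-modules are injective. If `A * B = 1`, then `v ↦ v * B` is a surjective
endomorphism of the left `R`-module of row vectors, so it is injective, and
`(B * A) * B = 1 * B` gives `B * A = 1`. -/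

theorem orzechProperty_of_moduleFinite (K R : Type*) [Semiring K] [OrzechProperty K] [Semiring R]
    [Module K R] [IsScalarTower K R R] [Module.Finite K R] : OrzechProperty R where
  injective_of_surjective_of_submodule' {M} _ _ _ N f hf := by
    let : Module K M := Module.compHom M (RingHom.smulOneHom : K →+* R)
    have : IsScalarTower K R M := ⟨fun k r m => by
      change (k • r) • m = (k • (1 : R)) • r • m
      rw [← mul_smul, smul_one_mul]⟩
    have : Module.Finite K M := .trans R M
    exact OrzechProperty.injective_of_surjective_of_injective
      (N.subtype.restrictScalars K) (f.restrictScalars K) N.subtype_injective hf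

theorem stablyFinite_of_finite_over_center_general (K R : Type*) [Semiring K] [OrzechProperty K]
    [Semiring R] [Module K R] [IsScalarTower K R R] [Module.Finite K R] : IsStablyFiniteRing R :=
  have := orzechProperty_of_moduleFinite K R
  inferInstance

/-- Let `R` be an associative unital ring (not necessarily commutative)
that is finitely generated as a module over its center.  Then `R` is stably finite:
for every `n ≥ 1` and all `n × n` matrices `A, B` with entries in `R`, if `A * B = 1`
(the identity matrix) then `B * A = 1`. -/
theorem stablyFinite_of_finite_over_center
    (R : Type*) [Ring R]
    (hR : Module.Finite (Subring.center R) R)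
    (n : ℕ) (hn : 1 ≤ n)
    (A B : Matrix (Fin n) (Fin n) R) (hAB : A * B = 1) :
    B * A = 1 :=
  have := stablyFinite_of_finite_over_center_general (Subring.center R) R
  mul_eq_one_symm hAB
end

section
/- Let R be a unital ring and e ∈ R an idempotent (e² = e). Let P be a finitely generated projective left R-module such that the R-submodule of P generated by the set e·P = {e·p : p ∈ P} is all of P (equivalently, (ReR)·P = P, where ReR is the two-sided ideal generated by e). Then there exist an integer N ≥ 0 and a left R-module Q such that P ⊕ Q is isomorphic to (Re)^N as left R-modules; that is, P is isomorphic to a direct summand of a finite direct sum of copies of the left ideal Re. -/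
/-! Right multiplication by `p : P` maps `Re` into `P` and sends `e` to `e • p`, so the hypothesis
says that the images of the homomorphisms `Re → P` together span `P`. Since `P` is finitely
generated, finitely many of them suffice and add up to a surjection `(Re)^N → P`, which splits
because `P` is projective. -/

section Semiring

variable {R : Type*} [Semiring R]

theorem range_lsum_eq_iSup_range {ι : Type*} [Fintype ι] [DecidableEq ι] {φ : ι → Type*}
    [∀ i, AddCommMonoid (φ i)] [∀ i, Module R (φ i)] {P : Type*} [AddCommMonoid P] [Module R P]
    (f : ∀ i, φ i →ₗ[R] P) :
    LinearMap.range (LinearMap.lsum R φ ℕ f) = ⨆ i, LinearMap.range (f i) := by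
  have lsum_comp_single (i : ι) : LinearMap.lsum R φ ℕ f ∘ₗ LinearMap.single R φ i = f i :=
    LinearMap.ext (LinearMap.lsum_piSingle R φ ℕ f i)
  calc LinearMap.range (LinearMap.lsum R φ ℕ f)
      = (⨆ i, LinearMap.range (LinearMap.single R φ i)).map (LinearMap.lsum R φ ℕ f) := by
        simp_rw [LinearMap.range_eq_map, Submodule.iSup_map_single, Submodule.pi_top]
    _ = ⨆ i, LinearMap.range (f i) := by
        simp_rw [Submodule.map_iSup, ← LinearMap.range_comp, lsum_comp_single]

/-- The trace of `M` in `P`: the sum of the images of all homomorphisms from `M` to `P`. It is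
all of `P` exactly when `P` is generated by `M`, i.e. is a quotient of a direct sum of copies
of `M`. -/
def traceSubmodule (R M P : Type*) [Semiring R] [AddCommMonoid M] [Module R M]
    [AddCommMonoid P] [Module R P] : Submodule R P :=
  ⨆ f : M →ₗ[R] P, LinearMap.range f

variable {P : Type*} [AddCommMonoid P] [Module R P]

theorem span_range_smul_le_traceSubmodule (a : R) :
    Submodule.span R (Set.range fun p : P => a • p) ≤
      traceSubmodule R (Submodule.span R ({a} : Set R)) P := by
  rw [Submodule.span_le]
  rintro _ ⟨p, rfl⟩
  let smulRight : Submodule.span R ({a} : Set R) →ₗ[R] P :=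
    LinearMap.toSpanSingleton R P p ∘ₗ Submodule.subtype _
  exact le_iSup LinearMap.range smulRight ⟨⟨a, Submodule.mem_span_singleton_self a⟩, rfl⟩

theorem exists_surjective_pi_of_traceSubmodule_eq_top {M : Type*} [AddCommMonoid M] [Module R M]
    [Module.Finite R P] (h : traceSubmodule R M P = ⊤) :
    ∃ (N : ℕ) (f : (Fin N → M) →ₗ[R] P), Function.Surjective f := by
  have top_compact : IsCompactElement (⊤ : Submodule R P) :=
    (Submodule.fg_iff_compact ⊤).mp Module.Finite.fg_top
  obtain ⟨s, hs⟩ := CompleteLattice.IsCompactElement.exists_finset_of_le_iSup _ top_compact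
    LinearMap.range h.ge
  refine ⟨s.card, LinearMap.lsum R (fun _ => M) ℕ fun i => (s.equivFin.symm i).1, ?_⟩
  rw [← LinearMap.range_eq_top, range_lsum_eq_iSup_range,
    s.equivFin.symm.iSup_comp (g := fun f : s => LinearMap.range f.1), iSup_subtype]
  exact top_le_iff.mp hs

end Semiring

section Ring

variable {R M P : Type*} [Ring R] [AddCommGroup M] [Module R M] [AddCommGroup P] [Module R P]

theorem nonempty_prod_ker_equiv_of_surjective [Module.Projective R P] (f : M →ₗ[R] P)
    (hf : Function.Surjective f) : Nonempty ((P × LinearMap.ker f) ≃ₗ[R] M) := by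
  obtain ⟨g, hg⟩ := Module.projective_lifting_property f LinearMap.id hf
  obtain ⟨splitting, -⟩ := f.exact_subtype_ker_map.splitSurjectiveEquiv
    (Submodule.subtype_injective _) ⟨g, hg⟩
  exact ⟨LinearEquiv.prodComm R P _ ≪≫ₗ splitting.symm⟩

theorem summand_of_copies_of_Re_general [Module.Finite R P] [Module.Projective R P]
    (h : traceSubmodule R M P = ⊤) :
    ∃ (N : ℕ) (Q : Submodule R (Fin N → M)), Nonempty ((P × Q) ≃ₗ[R] (Fin N → M)) := by
  obtain ⟨N, f, hf⟩ := exists_surjective_pi_of_traceSubmodule_eq_top h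
  exact ⟨N, LinearMap.ker f, nonempty_prod_ker_equiv_of_surjective f hf⟩

end Ring

/-- Let `R` be a unital ring and `e ∈ R` an idempotent.  Let `P` be a
finitely generated projective left `R`-module such that the `R`-submodule of `P`
generated by the set `{e • p : p ∈ P}` is all of `P`.  Then there exist `N ≥ 0` and a
left `R`-module `Q` such that `P ⊕ Q ≅ (Re)^N` as left `R`-modules; that is, `P` is
isomorphic to a direct summand of a finite direct sum of copies of the left ideal `Re`
(here realized as `Submodule.span R {e}`, with the complement `Q` realized as a
submodule of `(Re)^N`). -/
theorem summand_of_copies_of_Re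
    (R : Type*) [Ring R] (e : R) (he : e * e = e)
    (P : Type*) [AddCommGroup P] [Module R P]
    (hPfg : Module.Finite R P) (hPproj : Module.Projective R P)
    (hP : Submodule.span R (Set.range fun p : P => e • p) = ⊤) :
    ∃ (N : ℕ) (Q : Submodule R (Fin N → ↥(Submodule.span R ({e} : Set R)))),
      Nonempty ((P × ↥Q) ≃ₗ[R] (Fin N → ↥(Submodule.span R ({e} : Set R)))) := by
  have trace_eq_top : traceSubmodule R (Submodule.span R ({e} : Set R)) P = ⊤ :=
    top_le_iff.mp (hP ▸ span_range_smul_le_traceSubmodule e)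
  exact summand_of_copies_of_Re_general trace_eq_top
end

section
/- Let 𝕜 be a field of characteristic zero, V a finite-dimensional 𝕜-vector space, and let X₁, X₂, S be 𝕜-linear endomorphisms of V satisfying X₁∘X₂ = X₂∘X₁, S∘S = id_V, and S∘X₁ = X₂∘S − id_V. Then for every eigenvalue μ ∈ 𝕜 of X₂ there exists an eigenvalue λ ∈ 𝕜 of X₁ such that μ ∈ {λ − 1, λ, λ + 1}. -/
/-!
The intertwiner `Φ = S (X₁ - X₂) + 1` exchanges the roles of `X₁` and `X₂`, and its square is
`1 - (X₁ - X₂)²`. Let `v` be a `μ`-eigenvector of `X₂`. If `Φ v ≠ 0`, then `Φ v` is a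
`μ`-eigenvector of `X₁`. If `Φ v = 0`, then `(X₁ - X₂ - 1) (X₁ - X₂ + 1) v = 0`; since `X₁ - X₂`
commutes with `X₂`, some `μ`-eigenvector of `X₂` is an eigenvector of `X₁ - X₂` for `1` or `-1`,
hence an eigenvector of `X₁` for `μ + 1` or `μ - 1`.
-/

section HeckeIntertwiner

variable {A : Type*} [Ring A] {x₁ x₂ s : A}

/-- The intertwining element of the degenerate affine Hecke algebra `AH₂`, used to carry
eigenvectors of `x₂` to eigenvectors of `x₁`. The elements `x₁`, `x₂`, `s` live in an arbitrary
ring; the signs are those for the relation `s * x₁ = x₂ * s - 1`. -/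
def heckeIntertwiner (x₁ x₂ s : A) : A :=
  s * (x₁ - x₂) + 1

theorem mul_eq_mul_sub_one_of_hecke_relation (hs : s * s = 1) (hrel : s * x₁ = x₂ * s - 1) :
    x₁ * s = s * x₂ - 1 :=
  calc
    x₁ * s = s * (s * x₁) * s := by rw [← mul_assoc, hs, one_mul]
    _ = s * x₂ * (s * s) - s * s := by rw [hrel]; noncomm_ring
    _ = s * x₂ - 1 := by rw [hs, mul_one]

theorem semiconjBy_heckeIntertwiner (hcomm : Commute x₁ x₂) (hrel : s * x₁ = x₂ * s - 1) :
    SemiconjBy (heckeIntertwiner x₁ x₂ s) x₁ x₂ := by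
  have hdiff : Commute (x₁ - x₂) x₁ := (Commute.refl x₁).sub_left hcomm.symm
  calc
    (s * (x₁ - x₂) + 1) * x₁ = s * x₁ * (x₁ - x₂) + x₁ := by
      rw [add_mul, one_mul, mul_assoc, hdiff.eq, mul_assoc]
    _ = x₂ * (s * (x₁ - x₂) + 1) := by rw [hrel]; noncomm_ring

theorem semiconjBy_heckeIntertwiner_swap (hcomm : Commute x₁ x₂) (hs : s * s = 1)
    (hrel : s * x₁ = x₂ * s - 1) : SemiconjBy (heckeIntertwiner x₁ x₂ s) x₂ x₁ := by
  have hsx₂ : s * x₂ = x₁ * s + 1 := by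
    rw [mul_eq_mul_sub_one_of_hecke_relation hs hrel, sub_add_cancel]
  have hdiff : Commute (x₁ - x₂) x₂ := hcomm.sub_left (Commute.refl x₂)
  calc
    (s * (x₁ - x₂) + 1) * x₂ = s * x₂ * (x₁ - x₂) + x₂ := by
      rw [add_mul, one_mul, mul_assoc, hdiff.eq, mul_assoc]
    _ = x₁ * (s * (x₁ - x₂) + 1) := by rw [hsx₂]; noncomm_ring

theorem heckeIntertwiner_mul_self (hcomm : Commute x₁ x₂) (hs : s * s = 1)
    (hrel : s * x₁ = x₂ * s - 1) :
    heckeIntertwiner x₁ x₂ s * heckeIntertwiner x₁ x₂ s = 1 - (x₁ - x₂) * (x₁ - x₂) := by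
  set Φ := heckeIntertwiner x₁ x₂ s with hΦ
  have hanti : (x₁ - x₂) * Φ = -(Φ * (x₁ - x₂)) := by
    rw [← ((semiconjBy_heckeIntertwiner_swap hcomm hs hrel).sub_right
      (semiconjBy_heckeIntertwiner hcomm hrel)).eq, ← mul_neg, neg_sub]
  calc
    Φ * Φ = s * ((x₁ - x₂) * Φ) + Φ := by
      nth_rewrite 1 [hΦ]
      rw [heckeIntertwiner, add_mul, one_mul, mul_assoc]
    _ = -(s * Φ * (x₁ - x₂)) + Φ := by rw [hanti, mul_neg, mul_assoc]
    _ = -(s * s * ((x₁ - x₂) * (x₁ - x₂))) + 1 := by rw [hΦ, heckeIntertwiner]; noncomm_ring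
    _ = 1 - (x₁ - x₂) * (x₁ - x₂) := by rw [hs, one_mul, neg_add_eq_sub]

end HeckeIntertwiner

section Eigenvectors

variable {R M : Type*} [CommRing R] [AddCommGroup M] [Module R M]

theorem hasEigenvector_add {f g : Module.End R M} {a b : R} {v : M}
    (hf : f.HasEigenvector a v) (hg : g.HasEigenvector b v) :
    (f + g).HasEigenvector (a + b) v := by
  refine ⟨Module.End.mem_eigenspace_iff.mpr ?_, hf.2⟩
  rw [LinearMap.add_apply, hf.apply_eq_smul, hg.apply_eq_smul, add_smul]

theorem hasEigenvector_apply_of_semiconjBy {φ f g : Module.End R M} (h : SemiconjBy φ f g) {μ : R}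
    {v : M} (hv : f.HasEigenvector μ v) (hφv : φ v ≠ 0) : g.HasEigenvector μ (φ v) := by
  refine ⟨Module.End.mem_eigenspace_iff.mpr ?_, hφv⟩
  rw [← Module.End.mul_apply, ← h.eq, Module.End.mul_apply, hv.apply_eq_smul, map_smul]

theorem exists_common_hasEigenvector_of_commute {f g : Module.End R M} (hcomm : Commute f g)
    {a b μ : R} {v : M} (hv : g.HasEigenvector μ v)
    (hfv : ((f - algebraMap R _ a) * (f - algebraMap R _ b)) v = 0) :
    ∃ c, (c = a ∨ c = b) ∧ ∃ w, f.HasEigenvector c w ∧ g.HasEigenvector μ w := by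
  have hasEigenvector_of_sub_apply_eq_zero {c : R} {w : M} (hw : w ≠ 0)
      (h : (f - algebraMap R _ c) w = 0) : f.HasEigenvector c w :=
    ⟨Module.End.mem_eigenspace_iff.mpr (sub_eq_zero.mp h), hw⟩
  by_cases hb : (f - algebraMap R _ b) v = 0
  · exact ⟨b, .inr rfl, v, hasEigenvector_of_sub_apply_eq_zero hv.2 hb, hv⟩
  · have hcomm_sub : Commute (f - algebraMap R _ b) g :=
      hcomm.sub_left (Algebra.commute_algebraMap_left b g)
    exact ⟨a, .inl rfl, (f - algebraMap R _ b) v, hasEigenvector_of_sub_apply_eq_zero hb hfv,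
      hasEigenvector_apply_of_semiconjBy hcomm_sub hv hb⟩

theorem hasEigenvalue_add_one_or_sub_one_of_heckeIntertwiner_apply_eq_zero
    {X₁ X₂ S : Module.End R M} (hcomm : Commute X₁ X₂) (hS : S * S = 1)
    (hrel : S * X₁ = X₂ * S - 1) {μ : R} {v : M} (hv : X₂.HasEigenvector μ v)
    (hΦv : heckeIntertwiner X₁ X₂ S v = 0) :
    X₁.HasEigenvalue (μ + 1) ∨ X₁.HasEigenvalue (μ - 1) := by
  have hfactor : (X₁ - X₂ - algebraMap R _ 1) * (X₁ - X₂ - algebraMap R _ (-1)) =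
      -(heckeIntertwiner X₁ X₂ S * heckeIntertwiner X₁ X₂ S) := by
    rw [heckeIntertwiner_mul_self hcomm hS hrel, map_neg, map_one]
    noncomm_ring
  have hker : ((X₁ - X₂ - algebraMap R _ 1) * (X₁ - X₂ - algebraMap R _ (-1))) v = 0 := by
    rw [hfactor, LinearMap.neg_apply, Module.End.mul_apply, hΦv, map_zero, neg_zero]
  obtain ⟨c, hc, w, hdiff, hw⟩ :=
    exists_common_hasEigenvector_of_commute (hcomm.sub_left (Commute.refl X₂)) hv hker
  have hX₁ : X₁.HasEigenvalue (μ + c) := by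
    simpa only [sub_add_cancel, add_comm c μ] using
      Module.End.hasEigenvalue_of_hasEigenvector (hasEigenvector_add hdiff hw)
  rcases hc with rfl | rfl
  · exact .inl hX₁
  · exact .inr (sub_eq_add_neg μ 1 ▸ hX₁)

theorem eigenvalue_of_dAHA_module_general (X₁ X₂ S : Module.End R M) (hcomm : X₁ * X₂ = X₂ * X₁)
    (hS : S * S = 1) (hrel : S * X₁ = X₂ * S - 1) (μ : R) (hμ : X₂.HasEigenvalue μ) :
    ∃ lam : R, X₁.HasEigenvalue lam ∧ (μ = lam - 1 ∨ μ = lam ∨ μ = lam + 1) := by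
  obtain ⟨v, hv⟩ := hμ.exists_hasEigenvector
  by_cases hΦv : heckeIntertwiner X₁ X₂ S v = 0
  · rcases hasEigenvalue_add_one_or_sub_one_of_heckeIntertwiner_apply_eq_zero hcomm hS hrel hv hΦv
      with hadd | hsub
    · exact ⟨μ + 1, hadd, .inl (add_sub_cancel_right μ 1).symm⟩
    · exact ⟨μ - 1, hsub, .inr (.inr (sub_add_cancel μ 1).symm)⟩
  · have hX₁ : X₁.HasEigenvector μ (heckeIntertwiner X₁ X₂ S v) :=
      hasEigenvector_apply_of_semiconjBy (semiconjBy_heckeIntertwiner_swap hcomm hS hrel) hv hΦv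
    exact ⟨μ, Module.End.hasEigenvalue_of_hasEigenvector hX₁, .inr (.inl rfl)⟩

end Eigenvectors

/-- Let `𝕜` be a field of characteristic zero, `V` a finite-dimensional
`𝕜`-vector space, and `X₁, X₂, S` `𝕜`-linear endomorphisms of `V` satisfying
`X₁∘X₂ = X₂∘X₁`, `S∘S = id`, and `S∘X₁ = X₂∘S − id`.  Then for every eigenvalue `μ` of
`X₂` there exists an eigenvalue `lam` of `X₁` such that `μ ∈ {lam − 1, lam, lam + 1}`. -/
theorem eigenvalue_of_dAHA_module
    (𝕜 : Type*) [Field 𝕜] [CharZero 𝕜]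
    (V : Type*) [AddCommGroup V] [Module 𝕜 V] [FiniteDimensional 𝕜 V]
    (X₁ X₂ S : Module.End 𝕜 V)
    (hcomm : X₁ * X₂ = X₂ * X₁)
    (hS : S * S = 1)
    (hrel : S * X₁ = X₂ * S - 1)
    (μ : 𝕜) (hμ : Module.End.HasEigenvalue X₂ μ) :
    ∃ lam : 𝕜, Module.End.HasEigenvalue X₁ lam ∧
      (μ = lam - 1 ∨ μ = lam ∨ μ = lam + 1) :=
  eigenvalue_of_dAHA_module_general X₁ X₂ S hcomm hS hrel μ hμ
end

section
/- Let 𝕜 be an algebraically closed field of characteristic zero, V a finite-dimensional 𝕜-vector space, and n ≥ 1. Let X₁, …, Xₙ be pairwise commuting 𝕜-linear endomorphisms of V, and let S₁, …, S_{n−1} be 𝕜-linear endomorphisms of V satisfying Sᵢ∘Sᵢ = id_V and Sᵢ∘Xᵢ = X_{i+1}∘Sᵢ − id_V for each 1 ≤ i ≤ n−1. Suppose f ∈ 𝕜[w] is a monic polynomial with f(X₁) = 0. Then for every 1 ≤ j ≤ n and every eigenvalue μ ∈ 𝕜 of Xⱼ, there exist a root λ ∈ 𝕜 of f and an integer d such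 that μ = λ + d. -/
/-!
Put `φ = ⁅Sᵢ, Xᵢ⁆`. The relations give `φ Xᵢ₊₁ = Xᵢ φ`, so for `v` in the `μ`-eigenspace of `Xᵢ₊₁`
either `φ v` is an eigenvector of `Xᵢ` with the same eigenvalue `μ`, or `φ v = 0`; in the latter
case `Xᵢ` preserves the span of `v` and `Sᵢ v` and acts there as `μ - Sᵢ`, so it has eigenvalue
`μ + 1` or `μ - 1`. Descending from `Xⱼ` to `X₀`, the eigenvalue moves by an integer, and every
eigenvalue of `X₀` is a root of `f`.
-/

open Module.End Polynomial

section Ring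

variable {A : Type*} [Ring A] {s x y : A}

theorem mul_eq_mul_add_one_of_mul_eq_mul_sub_one (hs : s * s = 1) (hrel : s * x = y * s - 1) :
    s * y = x * s + 1 := by
  have hy : y = s * x * s + s := by
    rw [hrel, sub_mul, mul_assoc, hs, mul_one, one_mul, sub_add_cancel]
  calc s * y = s * s * x * s + s * s := by rw [hy]; noncomm_ring
    _ = x * s + 1 := by rw [hs, one_mul]

theorem semiconjBy_lie_of_mul_eq_mul_add_one (hxy : Commute x y) (hsy : s * y = x * s + 1) :
    SemiconjBy ⁅s, x⁆ y x := by
  calc ⁅s, x⁆ * y = s * (x * y) - x * (s * y) := by rw [Ring.lie_def]; noncomm_ring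
    _ = s * y * x - x * (s * y) := by rw [hxy.eq, mul_assoc]
    _ = x * ⁅s, x⁆ := by rw [hsy, Ring.lie_def]; noncomm_ring

end Ring

section Eigenvalue

variable {R V : Type*} [CommRing R] [AddCommGroup V] [Module R V]

theorem hasEigenvector_apply_of_semiconjBy_s5 {φ A B : Module.End R V} (h : SemiconjBy φ A B)
    {μ : R} {v : V} (hv : A.HasEigenvector μ v) (hφv : φ v ≠ 0) : B.HasEigenvector μ (φ v) := by
  refine ⟨mem_eigenspace_iff.mpr ?_, hφv⟩
  calc B (φ v) = φ (A v) := (LinearMap.congr_fun h.eq v).symm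
    _ = μ • φ v := by rw [hv.apply_eq_smul, map_smul]

theorem hasEigenvalue_add_or_sub_of_apply_eq {A : Module.End R V} {μ c : R} {v w : V}
    (hv0 : v ≠ 0) (hv : A v = μ • v + c • w) (hw : A w = μ • w + c • v) :
    A.HasEigenvalue (μ + c) ∨ A.HasEigenvalue (μ - c) := by
  by_cases hvw : v + w = 0
  · obtain rfl : w = -v := eq_neg_of_add_eq_zero_right hvw
    refine .inr (hasEigenvalue_of_hasEigenvector (x := v) ⟨mem_eigenspace_iff.mpr ?_, hv0⟩)
    rw [hv]
    module
  · refine .inl (hasEigenvalue_of_hasEigenvector (x := v + w) ⟨mem_eigenspace_iff.mpr ?_, hvw⟩)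
    rw [map_add, hv, hw]
    module

theorem exists_hasEigenvalue_sub_intCast_of_mul_eq_mul_sub_one {S X Y : Module.End R V}
    (hXY : Commute X Y) (hS : S * S = 1) (hrel : S * X = Y * S - 1)
    {μ : R} (hμ : Y.HasEigenvalue μ) : ∃ d : ℤ, |d| ≤ 1 ∧ X.HasEigenvalue (μ - d) := by
  obtain ⟨v, hv⟩ := hμ.exists_hasEigenvector
  have hSY : S * Y = X * S + 1 := mul_eq_mul_add_one_of_mul_eq_mul_sub_one hS hrel
  by_cases hφv : ⁅S, X⁆ v = 0
  · have hXSv : X (S v) = μ • S v - v := by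
      have hSYv := LinearMap.congr_fun hSY v
      simp only [mul_apply, hv.apply_eq_smul, map_smul, LinearMap.add_apply, one_apply] at hSYv
      exact eq_sub_of_add_eq hSYv.symm
    have hSXv : S (X v) = X (S v) := sub_eq_zero.mp hφv
    have hXv : X v = μ • v - S v := by
      have hSS (u : V) : S (S u) = u := LinearMap.congr_fun hS u
      calc X v = S (S (X v)) := (hSS _).symm
        _ = μ • v - S v := by rw [hSXv, hXSv, map_sub, map_smul, hSS]
    have hX : X.HasEigenvalue (μ + -1) ∨ X.HasEigenvalue (μ - -1) :=
      hasEigenvalue_add_or_sub_of_apply_eq (w := S v) hv.2 (by rw [hXv]; module)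
        (by rw [hXSv]; module)
    rcases hX with h | h
    · exact ⟨1, by simp, by rwa [Int.cast_one, sub_eq_add_neg]⟩
    · exact ⟨-1, by simp, by rwa [Int.cast_neg, Int.cast_one]⟩
  · have hφ : SemiconjBy ⁅S, X⁆ Y X := semiconjBy_lie_of_mul_eq_mul_add_one hXY hSY
    have hX : X.HasEigenvalue μ :=
      hasEigenvalue_of_hasEigenvector (hasEigenvector_apply_of_semiconjBy_s5 hφ hv hφv)
    exact ⟨0, by simp, by rwa [Int.cast_zero, sub_zero]⟩

theorem exists_hasEigenvalue_head_sub_intCast {n : ℕ} (hn : 1 ≤ n)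
    (X : Fin n → Module.End R V) (S : ℕ → Module.End R V)
    (hX : ∀ (i : ℕ) (hi : i + 1 < n), Commute (X ⟨i, Nat.lt_of_succ_lt hi⟩) (X ⟨i + 1, hi⟩))
    (hS : ∀ i, i + 1 < n → S i * S i = 1)
    (hrel : ∀ (i : ℕ) (hi : i + 1 < n),
      S i * X ⟨i, Nat.lt_of_succ_lt hi⟩ = X ⟨i + 1, hi⟩ * S i - 1)
    (j : Fin n) {μ : R} (hμ : (X j).HasEigenvalue μ) :
    ∃ d : ℤ, |d| ≤ (j : ℕ) ∧ (X ⟨0, hn⟩).HasEigenvalue (μ - d) := by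
  obtain ⟨j, hj⟩ := j
  induction j generalizing μ with
  | zero => exact ⟨0, by simp, by simpa using hμ⟩
  | succ i ih =>
    obtain ⟨d, hd, hμd⟩ := exists_hasEigenvalue_sub_intCast_of_mul_eq_mul_sub_one
      (hX i hj) (hS i hj) (hrel i hj) hμ
    obtain ⟨e, he, hμde⟩ := ih (Nat.lt_of_succ_lt hj) hμd
    refine ⟨e + d, ?_, by simpa [sub_sub, add_comm] using hμde⟩
    calc |e + d| ≤ |e| + |d| := abs_add_le e d
      _ ≤ (i + 1 : ℕ) := by push_cast; exact add_le_add he hd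

theorem isRoot_of_aeval_eq_zero_of_hasEigenvalue [IsDomain R] [Module.IsTorsionFree R V]
    {A : Module.End R V} {f : R[X]} (hf : aeval A f = 0) {μ : R} (hμ : A.HasEigenvalue μ) :
    f.IsRoot μ := by
  obtain ⟨v, hv⟩ := hμ.exists_hasEigenvector
  have hfv : f.eval μ • v = 0 := by
    rw [← aeval_apply_of_hasEigenvector hv, hf, LinearMap.zero_apply]
  exact (smul_eq_zero.mp hfv).resolve_right hv.2

end Eigenvalue

theorem eigenvalues_of_cyclotomic_module_congruent_to_roots_general
    {R V : Type*} [CommRing R] [IsDomain R] [AddCommGroup V] [Module R V]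
    [Module.IsTorsionFree R V] {n : ℕ} (hn : 1 ≤ n)
    (X : Fin n → Module.End R V) (S : ℕ → Module.End R V)
    (hX : ∀ (i : ℕ) (hi : i + 1 < n), Commute (X ⟨i, Nat.lt_of_succ_lt hi⟩) (X ⟨i + 1, hi⟩))
    (hS : ∀ i, i + 1 < n → S i * S i = 1)
    (hrel : ∀ (i : ℕ) (hi : i + 1 < n),
      S i * X ⟨i, Nat.lt_of_succ_lt hi⟩ = X ⟨i + 1, hi⟩ * S i - 1)
    {f : R[X]} (hfX : aeval (X ⟨0, hn⟩) f = 0)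
    (j : Fin n) {μ : R} (hμ : (X j).HasEigenvalue μ) :
    ∃ (lam : R) (d : ℤ), f.IsRoot lam ∧ |d| ≤ (j : ℕ) ∧ μ = lam + d := by
  obtain ⟨d, hd, hμd⟩ := exists_hasEigenvalue_head_sub_intCast hn X S hX hS hrel j hμ
  exact ⟨μ - d, d, isRoot_of_aeval_eq_zero_of_hasEigenvalue hfX hμd, hd,
    (sub_add_cancel μ (d : R)).symm⟩

/-- Let `𝕜` be an algebraically closed field of characteristic zero,
`V` a finite-dimensional `𝕜`-vector space, and `n ≥ 1`.  Let `X 0, …, X (n-1)` be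
pairwise commuting endomorphisms of `V` and `S 0, …, S (n-2)` endomorphisms satisfying
`Sᵢ∘Sᵢ = id` and `Sᵢ∘Xᵢ = Xᵢ₊₁∘Sᵢ − id` (0-indexed).  If `f` is a monic polynomial with
`f(X 0) = 0`, then every eigenvalue `μ` of any `X j` is of the form `lam + d` for some
root `lam` of `f` and some integer `d`. -/
theorem eigenvalues_of_cyclotomic_module_congruent_to_roots
    (𝕜 : Type*) [Field 𝕜] [IsAlgClosed 𝕜] [CharZero 𝕜]
    (V : Type*) [AddCommGroup V] [Module 𝕜 V] [FiniteDimensional 𝕜 V]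
    (n : ℕ) (hn : 1 ≤ n)
    (X : Fin n → Module.End 𝕜 V) (S : ℕ → Module.End 𝕜 V)
    (hX : ∀ i j, X i * X j = X j * X i)
    (hS : ∀ i, i + 1 < n → S i * S i = 1)
    (hrel : ∀ (i : ℕ) (hi : i + 1 < n),
      S i * X ⟨i, Nat.lt_of_succ_lt hi⟩ = X ⟨i + 1, hi⟩ * S i - 1)
    (f : Polynomial 𝕜) (hf : f.Monic)
    (hfX : Polynomial.aeval (X ⟨0, hn⟩) f = 0)
    (j : Fin n) (μ : 𝕜) (hμ : Module.End.HasEigenvalue (X j) μ) :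
    ∃ (lam : 𝕜) (d : ℤ), f.IsRoot lam ∧ μ = lam + (d : 𝕜) := by
  obtain ⟨lam, d, hlam, -, hμd⟩ := eigenvalues_of_cyclotomic_module_congruent_to_roots_general
    hn X S (fun _ _ ↦ hX _ _) hS hrel hfX j hμ
  exact ⟨lam, d, hlam, hμd⟩
end

section
/- The operators D₁⁺, …, D_{n−1}⁺ on K = 𝕜(x₁,…,xₙ) satisfy the Coxeter relations of the symmetric group Sₙ: Dᵢ⁺∘Dᵢ⁺ = id_K for all i; Dᵢ⁺∘Dⱼ⁺ = Dⱼ⁺∘Dᵢ⁺ whenever |i − j| ≥ 2; and Dᵢ⁺∘D_{i+1}⁺∘Dᵢ⁺ = D_{i+1}⁺∘Dᵢ⁺∘D_{i+1}⁺ for all 1 ≤ i ≤ n−2. Consequently there is a unique action of Sₙ on K by 𝕜-linear automorphisms in which the simple transposition (i, i+1) acts as Dᵢ⁺ (the '⊕-action' of Sₙ on K). -/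
noncomputable section

open MvPolynomial

/-- The `i`-th variable `xᵢ`, regarded as an element of the field `K` of rational
functions (the fraction field of `MvPolynomial (Fin n) 𝕜`). -/
def ratVar (𝕜 : Type*) [Field 𝕜] (n : ℕ) (K : Type*) [Field K]
    [Algebra (MvPolynomial (Fin n) 𝕜) K] (i : Fin n) : K :=
  algebraMap (MvPolynomial (Fin n) 𝕜) K (X i)

/-- The `𝕜`-linear operator `f ↦ s f + (f - s f) * c⁻¹`; with `s = sᵢ` and
`c = x_{i+1} - x_i` this is `Dᵢ⁺ = sᵢ + ∂ᵢ`, where `∂ᵢ f = (f - sᵢ f)/(x_{i+1} - x_i)`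
is the Demazure operator. -/
def demazurePlusAux (𝕜 : Type*) [Field 𝕜] (K : Type*) [Field K] [Algebra 𝕜 K]
    (s : K ≃ₐ[𝕜] K) (c : K) : Module.End 𝕜 K :=
  s.toLinearMap + (LinearMap.mulRight 𝕜 c⁻¹) ∘ₗ ((LinearMap.id : K →ₗ[𝕜] K) - s.toLinearMap)

/-- The operator `Dᵢ⁺ = sᵢ + ∂ᵢ` (with `0`-indexed variables, so `sᵢ` is induced by the
transposition of the variables `x i` and `x (i+1)`), built from a family `s` of
automorphisms of `K` indexed by permutations. -/
def DPlus (𝕜 : Type*) [Field 𝕜] {n : ℕ} (K : Type*) [Field K] [Algebra 𝕜 K]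
    [Algebra (MvPolynomial (Fin n) 𝕜) K]
    (s : Equiv.Perm (Fin n) → (K ≃ₐ[𝕜] K)) (i : ℕ) (hi : i + 1 < n) : Module.End 𝕜 K :=
  demazurePlusAux 𝕜 K (s (Equiv.swap ⟨i, Nat.lt_of_succ_lt hi⟩ ⟨i + 1, hi⟩))
    (ratVar 𝕜 n K ⟨i + 1, hi⟩ - ratVar 𝕜 n K ⟨i, Nat.lt_of_succ_lt hi⟩)

/-!
Put `u = (x_{i+1} - x_i)⁻¹`, so that `Dᵢ⁺ = u + (1 - u) sᵢ` and `sᵢ u = -u`. Expanding products of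
such operators in the group elements of `Sₙ` reduces the quadratic relation to
`u² + (1 - u) (1 + u) = 1`, and the braid relation to the partial fraction identity
`c⁻¹ d⁻¹ = (c + d)⁻¹ (c⁻¹ + d⁻¹)` for `c = x_{i+1} - x_i` and `d = x_{i+2} - x_{i+1}`.

The action exists and is unique because the simple transpositions make `S_{n+1}` the Coxeter group
of type `Aₙ`. To see that the Coxeter group `W` maps injectively to `S_{n+1}`, let `H` be generated
by all simple reflections but the first. The products `d_k = s₀ s₁ ⋯ s_{k-1}` satisfy
`d_{w k} w ∈ H d_k` for every `w`, so an element `w` of the kernel lies in `d₀⁻¹ H d₀ = H`, which is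
a quotient of the Coxeter group of type `A_{n-1}`, and induction applies.
-/

section CoxeterRelations

variable {M : Type*} [Monoid M] {n : ℕ}

lemma mul_pow_two_eq_one_iff {a b : M} (ha : a * a = 1) (hb : b * b = 1) :
    (a * b) ^ 2 = 1 ↔ Commute a b := by
  have hba : b * a * (a * b) = 1 := by rw [mul_assoc, ← mul_assoc a, ha, one_mul, hb]
  have hab : a * b * (b * a) = 1 := by rw [mul_assoc, ← mul_assoc b, hb, one_mul, ha]
  rw [pow_two]
  exact ⟨fun h ↦ left_inv_eq_right_inv h hab, fun h ↦ by nth_rw 1 [h.eq, hba]⟩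

lemma mul_pow_three_eq_one_iff {a b : M} (ha : a * a = 1) (hb : b * b = 1) :
    (a * b) ^ 3 = 1 ↔ a * b * a = b * a * b := by
  have hbab : b * a * b * (b * a * b) = 1 := by
    calc b * a * b * (b * a * b) = b * (a * (b * b) * a) * b := by simp only [mul_assoc]
      _ = 1 := by rw [hb, mul_one, ha, mul_one, hb]
  have hpow : (a * b) ^ 3 = a * b * a * (b * a * b) := by
    simp only [pow_succ, pow_zero, one_mul, mul_assoc]
  rw [hpow]
  exact ⟨fun h ↦ left_inv_eq_right_inv h hbab, fun h ↦ by rw [h, hbab]⟩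

lemma isLiftable_A_iff {f : Fin n → M} :
    (CoxeterMatrix.A n).IsLiftable f ↔
      (∀ i, f i * f i = 1) ∧
      (∀ i j : Fin n, (i : ℕ) + 1 < j → Commute (f i) (f j)) ∧
      ∀ i j : Fin n, (i : ℕ) + 1 = j → f i * f j * f i = f j * f i * f j := by
  constructor
  · intro h
    have sq : ∀ i, f i * f i = 1 := fun i ↦ by simpa [CoxeterMatrix.A] using h i i
    refine ⟨sq, fun i j hij ↦ ?_, fun i j hij ↦ ?_⟩
    · rw [← mul_pow_two_eq_one_iff (sq i) (sq j)]
      have hM : CoxeterMatrix.A n i j = 2 := by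
        simp only [CoxeterMatrix.A, Matrix.of_apply, Fin.ext_iff]
        split_ifs <;> omega
      exact hM ▸ h i j
    · rw [← mul_pow_three_eq_one_iff (sq i) (sq j)]
      have hM : CoxeterMatrix.A n i j = 3 := by
        simp only [CoxeterMatrix.A, Matrix.of_apply, Fin.ext_iff]
        split_ifs <;> omega
      exact hM ▸ h i j
  · rintro ⟨sq, comm, braid⟩ i j
    simp only [CoxeterMatrix.A, Matrix.of_apply]
    split_ifs with heq hadj
    · rw [heq, pow_one, sq]
    · rw [mul_pow_three_eq_one_iff (sq i) (sq j)]
      exact hadj.elim (fun h ↦ (braid j i h).symm) (braid i j)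
    · rw [mul_pow_two_eq_one_iff (sq i) (sq j)]
      obtain h | h : (i : ℕ) + 1 < j ∨ (j : ℕ) + 1 < i := by omega
      · exact comm i j h
      · exact (comm j i h).symm

lemma commute_partialProd {f : Fin n → M} {x : M} (k : Fin (n + 1))
    (h : ∀ j : Fin n, j.castSucc < k → Commute (f j) x) : Commute (Fin.partialProd f k) x := by
  induction k using Fin.induction with
  | zero => simp
  | succ k ih =>
    rw [Fin.partialProd_succ]
    exact (ih fun j hj ↦ h j (hj.trans k.castSucc_lt_succ)).mul_left (h k k.castSucc_lt_succ)

lemma partialProd_mul_of_lt {f : Fin n → M}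
    (comm : ∀ i j : Fin n, (i : ℕ) + 1 < j → Commute (f i) (f j))
    (braid : ∀ i j : Fin n, (i : ℕ) + 1 = j → f i * f j * f i = f j * f i * f j)
    {i j : Fin n} (hij : (i : ℕ) + 1 = j) {k : Fin (n + 1)} (hk : j.castSucc < k) :
    Fin.partialProd f k * f i = f j * Fin.partialProd f k := by
  induction k using Fin.induction with
  | zero => simp at hk
  | succ k ih =>
    obtain hjk | rfl := (Fin.castSucc_lt_succ_iff.mp hk).lt_or_eq
    · rw [Fin.partialProd_succ, mul_assoc, ← (comm i k (by omega)).eq, ← mul_assoc,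
        ih (by simpa using hjk), mul_assoc]
    · have hsucc : j.castSucc = i.succ := Fin.ext hij.symm
      have hcomm : Commute (Fin.partialProd f i.castSucc) (f j) :=
        commute_partialProd _ fun l hl ↦ comm l j (by grind)
      calc Fin.partialProd f j.succ * f i
          = Fin.partialProd f i.castSucc * (f i * f j * f i) := by
            simp only [Fin.partialProd_succ, hsucc, mul_assoc]
        _ = Fin.partialProd f i.castSucc * f j * (f i * f j) := by
            rw [braid i j hij]; simp only [mul_assoc]
        _ = f j * Fin.partialProd f j.succ := by
            simp only [hcomm.eq, Fin.partialProd_succ, hsucc, mul_assoc]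

end CoxeterRelations

section SymmetricGroup

lemma swap_braid {α : Type*} [DecidableEq α] {a b c : α} (hab : a ≠ b) (hac : a ≠ c)
    (hbc : b ≠ c) : Equiv.swap a b * Equiv.swap b c * Equiv.swap a b =
      Equiv.swap b c * Equiv.swap a b * Equiv.swap b c := by
  rw [Equiv.swap_mul_swap_mul_swap hab hac, Equiv.swap_comm a b, Equiv.swap_comm b c,
    Equiv.swap_mul_swap_mul_swap hbc.symm hac.symm, Equiv.swap_comm]

lemma isLiftable_swap_castSucc_succ (n : ℕ) :
    (CoxeterMatrix.A n).IsLiftable fun i : Fin n ↦ Equiv.swap i.castSucc i.succ := by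
  refine isLiftable_A_iff.mpr ⟨fun i ↦ Equiv.swap_mul_self _ _, fun i j hij ↦ ?_, fun i j hij ↦ ?_⟩
  · exact (Equiv.Perm.disjoint_swap_swap (by grind)).commute
  · rw [show j.castSucc = i.succ from Fin.ext hij.symm]
    exact swap_braid i.castSucc_lt_succ.ne (by grind) (by grind)

/-- The homomorphism from the Coxeter group of type `Aₙ` to `S_{n+1}` sending the simple
reflections to the simple transpositions; it is an isomorphism, see `permCoxeterSystem`. -/
def coxeterToPerm (n : ℕ) : (CoxeterMatrix.A n).Group →* Equiv.Perm (Fin (n + 1)) :=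
  (CoxeterMatrix.A n).toCoxeterSystem.lift ⟨_, isLiftable_swap_castSucc_succ n⟩

lemma coxeterToPerm_simple {n : ℕ} (i : Fin n) :
    coxeterToPerm n ((CoxeterMatrix.A n).simple i) = Equiv.swap i.castSucc i.succ :=
  (CoxeterMatrix.A n).toCoxeterSystem.lift_apply_simple (isLiftable_swap_castSucc_succ n) i

lemma isLiftable_simple_succ (n : ℕ) :
    (CoxeterMatrix.A n).IsLiftable fun i : Fin n ↦ (CoxeterMatrix.A (n + 1)).simple i.succ := by
  intro i j
  have hM : CoxeterMatrix.A n i j = CoxeterMatrix.A (n + 1) i.succ j.succ := by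
    simp [CoxeterMatrix.A]
  rw [hM]
  exact (CoxeterMatrix.A (n + 1)).toCoxeterSystem.simple_mul_simple_pow i.succ j.succ

/-- The homomorphism between Coxeter groups of type `A` induced by the inclusion of the Dynkin
diagram of type `Aₙ` in that of type `A_{n+1}` that misses the node `0`. -/
def coxeterSucc (n : ℕ) : (CoxeterMatrix.A n).Group →* (CoxeterMatrix.A (n + 1)).Group :=
  (CoxeterMatrix.A n).toCoxeterSystem.lift ⟨_, isLiftable_simple_succ n⟩

lemma coxeterSucc_simple {n : ℕ} (i : Fin n) :
    coxeterSucc n ((CoxeterMatrix.A n).simple i) = (CoxeterMatrix.A (n + 1)).simple i.succ :=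
  (CoxeterMatrix.A n).toCoxeterSystem.lift_apply_simple (isLiftable_simple_succ n) i

lemma coxeterToPerm_coxeterSucc_apply_succ {n : ℕ} (w : (CoxeterMatrix.A n).Group)
    (k : Fin (n + 1)) :
    coxeterToPerm (n + 1) (coxeterSucc n w) k.succ = (coxeterToPerm n w k).succ := by
  induction w using (CoxeterMatrix.A n).toCoxeterSystem.simple_induction generalizing k with
  | simple i =>
    simp only [CoxeterMatrix.toCoxeterSystem_simple, coxeterSucc_simple, coxeterToPerm_simple,
      Fin.castSucc_succ]
    exact ((Fin.succ_injective _).map_swap _ _ _).symm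
  | one => simp
  | mul w w' hw hw' => simp only [map_mul, Equiv.Perm.mul_apply, hw', hw]

lemma exists_partialProd_swap_mul_simple {n : ℕ} (i : Fin (n + 1)) (k : Fin (n + 2)) :
    ∃ x, Fin.partialProd (CoxeterMatrix.A (n + 1)).simple (Equiv.swap i.castSucc i.succ k) *
        (CoxeterMatrix.A (n + 1)).simple i =
      coxeterSucc n x * Fin.partialProd (CoxeterMatrix.A (n + 1)).simple k := by
  let cs := (CoxeterMatrix.A (n + 1)).toCoxeterSystem
  obtain ⟨-, comm, braid⟩ := isLiftable_A_iff.mp cs.simple_mul_simple_pow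
  obtain rfl | hne := eq_or_ne k i.castSucc
  · refine ⟨1, ?_⟩
    rw [Equiv.swap_apply_left, Fin.partialProd_succ, map_one, one_mul]
    exact cs.simple_mul_simple_cancel_right i
  obtain rfl | hne' := eq_or_ne k i.succ
  · exact ⟨1, by rw [Equiv.swap_apply_right, Fin.partialProd_succ, map_one, one_mul]⟩
  rw [Equiv.swap_apply_of_ne_of_ne hne hne']
  simp only [ne_eq, Fin.ext_iff, Fin.val_castSucc, Fin.val_succ] at hne hne'
  obtain hk | hk : (k : ℕ) < i ∨ (i : ℕ) + 1 < k := by omega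
  · obtain ⟨j, rfl⟩ := Fin.exists_succ_eq.mpr (show i ≠ 0 by rintro rfl; simp at hk)
    refine ⟨(CoxeterMatrix.A n).simple j, ?_⟩
    rw [coxeterSucc_simple]
    exact commute_partialProd _ fun l hl ↦ comm _ _ (by grind)
  · let j : Fin n := ⟨i, by omega⟩
    refine ⟨(CoxeterMatrix.A n).simple j, ?_⟩
    rw [coxeterSucc_simple]
    exact partialProd_mul_of_lt comm braid (by simp [j]) (by simpa [Fin.lt_def, j] using hk)

lemma exists_partialProd_mul {n : ℕ} (w : (CoxeterMatrix.A (n + 1)).Group) (k : Fin (n + 2)) :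
    ∃ x, Fin.partialProd (CoxeterMatrix.A (n + 1)).simple (coxeterToPerm (n + 1) w k) * w =
      coxeterSucc n x * Fin.partialProd (CoxeterMatrix.A (n + 1)).simple k := by
  induction w using (CoxeterMatrix.A (n + 1)).toCoxeterSystem.simple_induction
    generalizing k with
  | simple i =>
    rw [CoxeterMatrix.toCoxeterSystem_simple, coxeterToPerm_simple]
    exact exists_partialProd_swap_mul_simple i k
  | one => exact ⟨1, by simp⟩
  | mul w w' hw hw' =>
    obtain ⟨x', hx'⟩ := hw' k
    obtain ⟨x, hx⟩ := hw (coxeterToPerm (n + 1) w' k)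
    refine ⟨x * x', ?_⟩
    rw [map_mul, Equiv.Perm.mul_apply, ← mul_assoc, hx, mul_assoc, hx', map_mul, mul_assoc]

lemma coxeterToPerm_injective (n : ℕ) : Function.Injective (coxeterToPerm n) := by
  rw [injective_iff_map_eq_one]
  induction n with
  | zero =>
    exact fun w _ ↦ (CoxeterMatrix.A 0).toCoxeterSystem.simple_induction_left
      (p := (· = 1)) w rfl fun _ i ↦ i.elim0
  | succ n ih =>
    intro w hw
    obtain ⟨x, hx⟩ := exists_partialProd_mul w 0
    obtain rfl : w = coxeterSucc n x := by simpa [hw] using hx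
    have hx : coxeterToPerm n x = 1 := Equiv.ext fun k ↦ Fin.succ_injective _ <| by
      rw [← coxeterToPerm_coxeterSucc_apply_succ, hw, Equiv.Perm.one_apply, Equiv.Perm.one_apply]
    rw [ih x hx, map_one]

lemma coxeterToPerm_surjective (n : ℕ) : Function.Surjective (coxeterToPerm n) := by
  rw [← MonoidHom.mrange_eq_top, eq_top_iff, ← Equiv.Perm.mclosure_swap_castSucc_succ,
    Submonoid.closure_le]
  rintro _ ⟨i, rfl⟩
  exact ⟨_, coxeterToPerm_simple i⟩

/-- The symmetric group `S_{n+1}` as the Coxeter group of type `Aₙ`, whose simple reflections are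
the simple transpositions. -/
def permCoxeterSystem (n : ℕ) : CoxeterSystem (CoxeterMatrix.A n) (Equiv.Perm (Fin (n + 1))) :=
  (CoxeterMatrix.A n).toCoxeterSystem.map
    (MulEquiv.ofBijective (coxeterToPerm n)
      ⟨coxeterToPerm_injective n, coxeterToPerm_surjective n⟩)

lemma permCoxeterSystem_simple {n : ℕ} (i : Fin n) :
    (permCoxeterSystem n).simple i = Equiv.swap i.castSucc i.succ :=
  coxeterToPerm_simple i

theorem existsUnique_perm_monoidHom {M : Type*} [Monoid M] {n : ℕ}
    (d : ∀ i : ℕ, i + 1 < n → M) (sq : ∀ i hi, d i hi * d i hi = 1)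
    (comm : ∀ i j hi hj, i + 2 ≤ j → d i hi * d j hj = d j hj * d i hi)
    (braid : ∀ (i : ℕ) (hi : i + 2 < n), d i (Nat.lt_of_succ_lt hi) * d (i + 1) hi *
      d i (Nat.lt_of_succ_lt hi) = d (i + 1) hi * d i (Nat.lt_of_succ_lt hi) * d (i + 1) hi) :
    ∃! Φ : Equiv.Perm (Fin n) →* M, ∀ (i : ℕ) (hi : i + 1 < n),
      Φ (Equiv.swap ⟨i, Nat.lt_of_succ_lt hi⟩ ⟨i + 1, hi⟩) = d i hi := by
  obtain _ | n := n
  · exact ⟨1, fun i hi ↦ absurd hi (by omega), fun _ _ ↦ Subsingleton.elim _ _⟩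
  have hd : (CoxeterMatrix.A n).IsLiftable fun i : Fin n ↦ d i (by omega) := by
    refine isLiftable_A_iff.mpr ⟨fun i ↦ sq i _, fun i j hij ↦ comm i j _ _ hij, ?_⟩
    rintro i ⟨_, hj⟩ rfl
    exact braid i (by omega)
  refine ⟨(permCoxeterSystem n).lift ⟨_, hd⟩, fun i hi ↦ ?_, fun Ψ hΨ ↦ ?_⟩
  · exact permCoxeterSystem_simple (n := n) ⟨i, by omega⟩ ▸
      (permCoxeterSystem n).lift_apply_simple hd ⟨i, by omega⟩
  · refine (permCoxeterSystem n).ext_simple fun i ↦ ?_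
    rw [CoxeterSystem.lift_apply_simple, permCoxeterSystem_simple]
    exact hΨ i (by omega)

end SymmetricGroup

section Demazure

variable {𝕜 K : Type*} [Field 𝕜] [Field K] [Algebra 𝕜 K] {s r : K ≃ₐ[𝕜] K} {c d : K}

lemma demazurePlusAux_apply (s : K ≃ₐ[𝕜] K) (c f : K) :
    demazurePlusAux 𝕜 K s c f = c⁻¹ * f + (1 - c⁻¹) * s f := by
  change s f + (f - s f) * c⁻¹ = _
  ring

lemma demazurePlusAux_mul_self (hs : s * s = 1) (hc : s c = -c) :
    demazurePlusAux 𝕜 K s c * demazurePlusAux 𝕜 K s c = 1 := by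
  ext f
  have hss : s (s f) = f := DFunLike.congr_fun hs f
  simp only [Module.End.mul_apply, Module.End.one_apply, demazurePlusAux_apply, map_add, map_sub,
    map_mul, map_one, map_inv₀, hss, hc, inv_neg]
  ring

lemma demazurePlusAux_commute (hsr : Commute s r) (hd : s d = d) (hc : r c = c) :
    Commute (demazurePlusAux 𝕜 K s c) (demazurePlusAux 𝕜 K r d) := by
  ext f
  have hsrf : s (r f) = r (s f) := DFunLike.congr_fun hsr.eq f
  simp only [Module.End.mul_apply, demazurePlusAux_apply, map_add, map_sub, map_mul, map_one,
    map_inv₀, hsrf, hd, hc]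
  ring

/-- Here `c` and `d` play the role of the simple roots of a root system of type `A₂`. -/
lemma demazurePlusAux_braid (hs : s * s = 1) (hr : r * r = 1) (hsr : s * r * s = r * s * r)
    (hsc : s c = -c) (hsd : s d = c + d) (hrd : r d = -d) (hrc : r c = c + d)
    (hc : c ≠ 0) (hd : d ≠ 0) (hcd : c + d ≠ 0) :
    demazurePlusAux 𝕜 K s c * demazurePlusAux 𝕜 K r d * demazurePlusAux 𝕜 K s c =
      demazurePlusAux 𝕜 K r d * demazurePlusAux 𝕜 K s c * demazurePlusAux 𝕜 K r d := by
  ext f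
  have hss (g : K) : s (s g) = g := DFunLike.congr_fun hs g
  have hrr (g : K) : r (r g) = g := DFunLike.congr_fun hr g
  have hsrs : s (r (s f)) = r (s (r f)) := DFunLike.congr_fun hsr f
  have partial_fractions : c⁻¹ * d⁻¹ = (c + d)⁻¹ * (c⁻¹ + d⁻¹) := by field_simp; ring
  simp only [Module.End.mul_apply, demazurePlusAux_apply, map_add, map_sub, map_mul,
    map_one, map_inv₀, hss, hrr, hsrs, hsc, hsd, hrd, hrc, inv_neg]
  linear_combination
    ((c⁻¹ - d⁻¹) * f + (1 - c⁻¹) * s f - (1 - d⁻¹) * r f) * partial_fractions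

end Demazure

section RationalFunctions

variable {𝕜 : Type*} [Field 𝕜] {n : ℕ} {K : Type*} [Field K]
  [Algebra (MvPolynomial (Fin n) 𝕜) K] [IsFractionRing (MvPolynomial (Fin n) 𝕜) K]

lemma ratVar_injective : Function.Injective (ratVar 𝕜 n K) :=
  (IsFractionRing.injective (MvPolynomial (Fin n) 𝕜) K).comp X_injective

lemma ratVar_sub_ne_zero {i j : Fin n} (h : i ≠ j) : ratVar 𝕜 n K i - ratVar 𝕜 n K j ≠ 0 :=
  sub_ne_zero.mpr (ratVar_injective.ne h)

variable [Algebra 𝕜 K] [IsScalarTower 𝕜 (MvPolynomial (Fin n) 𝕜) K]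

lemma algEquiv_ext_ratVar {φ ψ : K ≃ₐ[𝕜] K}
    (h : ∀ i, φ (ratVar 𝕜 n K i) = ψ (ratVar 𝕜 n K i)) : φ = ψ :=
  AlgEquiv.coe_toAlgHom_injective <|
    IsLocalization.algHom_ext (nonZeroDivisors (MvPolynomial (Fin n) 𝕜)) (MvPolynomial.algHom_ext h)

variable {s : Equiv.Perm (Fin n) → (K ≃ₐ[𝕜] K)}
  (hs : ∀ σ i, s σ (ratVar 𝕜 n K i) = ratVar 𝕜 n K (σ i))

include hs

lemma permAction_mul (σ τ : Equiv.Perm (Fin n)) : s (σ * τ) = s σ * s τ :=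
  algEquiv_ext_ratVar (n := n) fun i ↦ by simp [hs]

lemma permAction_one : s 1 = 1 :=
  algEquiv_ext_ratVar (n := n) fun i ↦ by simp [hs]

lemma permAction_swap_mul_self (a b : Fin n) : s (Equiv.swap a b) * s (Equiv.swap a b) = 1 := by
  rw [← permAction_mul hs, Equiv.swap_mul_self, permAction_one hs]

lemma DPlus_mul_self (i : ℕ) (hi : i + 1 < n) : DPlus 𝕜 K s i hi * DPlus 𝕜 K s i hi = 1 :=
  demazurePlusAux_mul_self (permAction_swap_mul_self hs _ _) (by simp [hs])

lemma DPlus_commute {i j : ℕ} (hi : i + 1 < n) (hj : j + 1 < n) (hij : i + 2 ≤ j) :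
    Commute (DPlus 𝕜 K s i hi) (DPlus 𝕜 K s j hj) := by
  refine demazurePlusAux_commute ?_ ?_ ?_
  · rw [Commute, SemiconjBy, ← permAction_mul hs, ← permAction_mul hs,
      (Equiv.Perm.disjoint_swap_swap (by grind)).commute.eq]
  · rw [map_sub, hs, hs, Equiv.swap_apply_of_ne_of_ne, Equiv.swap_apply_of_ne_of_ne] <;> grind
  · rw [map_sub, hs, hs, Equiv.swap_apply_of_ne_of_ne, Equiv.swap_apply_of_ne_of_ne] <;> grind

lemma demazurePlusAux_swap_braid {a b c : Fin n} (hab : a ≠ b) (hac : a ≠ c) (hbc : b ≠ c) :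
    demazurePlusAux 𝕜 K (s (Equiv.swap a b)) (ratVar 𝕜 n K b - ratVar 𝕜 n K a) *
        demazurePlusAux 𝕜 K (s (Equiv.swap b c)) (ratVar 𝕜 n K c - ratVar 𝕜 n K b) *
        demazurePlusAux 𝕜 K (s (Equiv.swap a b)) (ratVar 𝕜 n K b - ratVar 𝕜 n K a) =
      demazurePlusAux 𝕜 K (s (Equiv.swap b c)) (ratVar 𝕜 n K c - ratVar 𝕜 n K b) *
        demazurePlusAux 𝕜 K (s (Equiv.swap a b)) (ratVar 𝕜 n K b - ratVar 𝕜 n K a) *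
        demazurePlusAux 𝕜 K (s (Equiv.swap b c)) (ratVar 𝕜 n K c - ratVar 𝕜 n K b) := by
  have hc : Equiv.swap a b c = c := Equiv.swap_apply_of_ne_of_ne hac.symm hbc.symm
  have ha : Equiv.swap b c a = a := Equiv.swap_apply_of_ne_of_ne hab hac
  refine demazurePlusAux_braid (permAction_swap_mul_self hs a b) (permAction_swap_mul_self hs b c)
    ?_ ?_ ?_ ?_ ?_ (ratVar_sub_ne_zero hab.symm) (ratVar_sub_ne_zero hbc.symm) ?_
  · simp only [← permAction_mul hs, swap_braid hab hac hbc]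
  · simp [hs]
  · simp [hs, hc]
  · simp [hs]
  · simp [hs, ha]
  · rw [sub_add_sub_cancel']
    exact ratVar_sub_ne_zero hac.symm

lemma DPlus_braid (i : ℕ) (hi : i + 2 < n) :
    DPlus 𝕜 K s i (Nat.lt_of_succ_lt hi) * DPlus 𝕜 K s (i + 1) hi *
        DPlus 𝕜 K s i (Nat.lt_of_succ_lt hi) =
      DPlus 𝕜 K s (i + 1) hi * DPlus 𝕜 K s i (Nat.lt_of_succ_lt hi) * DPlus 𝕜 K s (i + 1) hi :=
  demazurePlusAux_swap_braid hs (by simp) (by grind) (by simp)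

end RationalFunctions

theorem DPlus_coxeter_relations_and_unique_action_general
    (𝕜 : Type*) [Field 𝕜] (n : ℕ)
    (K : Type*) [Field K] [Algebra 𝕜 K] [Algebra (MvPolynomial (Fin n) 𝕜) K]
    [IsScalarTower 𝕜 (MvPolynomial (Fin n) 𝕜) K]
    [IsFractionRing (MvPolynomial (Fin n) 𝕜) K]
    (s : Equiv.Perm (Fin n) → (K ≃ₐ[𝕜] K))
    (hs : ∀ (σ : Equiv.Perm (Fin n)) (i : Fin n), s σ (ratVar 𝕜 n K i) = ratVar 𝕜 n K (σ i)) :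
    (∀ (i : ℕ) (hi : i + 1 < n), DPlus 𝕜 K s i hi * DPlus 𝕜 K s i hi = 1) ∧
    (∀ (i j : ℕ) (hi : i + 1 < n) (hj : j + 1 < n), i + 2 ≤ j ∨ j + 2 ≤ i →
      DPlus 𝕜 K s i hi * DPlus 𝕜 K s j hj = DPlus 𝕜 K s j hj * DPlus 𝕜 K s i hi) ∧
    (∀ (i : ℕ) (hi : i + 2 < n),
      DPlus 𝕜 K s i (Nat.lt_of_succ_lt hi) * DPlus 𝕜 K s (i + 1) hi *
          DPlus 𝕜 K s i (Nat.lt_of_succ_lt hi) =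
        DPlus 𝕜 K s (i + 1) hi * DPlus 𝕜 K s i (Nat.lt_of_succ_lt hi) * DPlus 𝕜 K s (i + 1) hi) ∧
    (∃! Φ : Equiv.Perm (Fin n) →* Module.End 𝕜 K,
      ∀ (i : ℕ) (hi : i + 1 < n),
        Φ (Equiv.swap ⟨i, Nat.lt_of_succ_lt hi⟩ ⟨i + 1, hi⟩) = DPlus 𝕜 K s i hi) :=
  ⟨DPlus_mul_self hs,
    fun _ _ hi hj hij ↦ hij.elim (DPlus_commute hs hi hj)
      fun hji ↦ (DPlus_commute hs hj hi hji).symm,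
    DPlus_braid hs,
    existsUnique_perm_monoidHom _ (DPlus_mul_self hs)
      (fun _ _ hi hj hij ↦ DPlus_commute hs hi hj hij) (DPlus_braid hs)⟩

/-- The operators `D₁⁺, …, D_{n−1}⁺` on `K = 𝕜(x₁,…,xₙ)` satisfy the
Coxeter relations of the symmetric group `Sₙ`, and consequently there is a unique action
of `Sₙ` on `K` by `𝕜`-linear maps in which the simple transposition `(i, i+1)` acts as
`Dᵢ⁺` (the `⊕`-action).  Here `s` is the permutation action of `Sₙ` on `K` (characterized
by `hs`), from which the `Dᵢ⁺` are built. -/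
theorem DPlus_coxeter_relations_and_unique_action
    (𝕜 : Type*) [Field 𝕜] [CharZero 𝕜] (n : ℕ) (hn : 1 ≤ n)
    (K : Type*) [Field K] [Algebra 𝕜 K] [Algebra (MvPolynomial (Fin n) 𝕜) K]
    [IsScalarTower 𝕜 (MvPolynomial (Fin n) 𝕜) K]
    [IsFractionRing (MvPolynomial (Fin n) 𝕜) K]
    (s : Equiv.Perm (Fin n) → (K ≃ₐ[𝕜] K))
    (hs : ∀ (σ : Equiv.Perm (Fin n)) (i : Fin n), s σ (ratVar 𝕜 n K i) = ratVar 𝕜 n K (σ i)) :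
    (∀ (i : ℕ) (hi : i + 1 < n), DPlus 𝕜 K s i hi * DPlus 𝕜 K s i hi = 1) ∧
    (∀ (i j : ℕ) (hi : i + 1 < n) (hj : j + 1 < n), i + 2 ≤ j ∨ j + 2 ≤ i →
      DPlus 𝕜 K s i hi * DPlus 𝕜 K s j hj = DPlus 𝕜 K s j hj * DPlus 𝕜 K s i hi) ∧
    (∀ (i : ℕ) (hi : i + 2 < n),
      DPlus 𝕜 K s i (by omega) * DPlus 𝕜 K s (i + 1) hi * DPlus 𝕜 K s i (by omega) =
        DPlus 𝕜 K s (i + 1) hi * DPlus 𝕜 K s i (by omega) * DPlus 𝕜 K s (i + 1) hi) ∧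
    (∃! Φ : Equiv.Perm (Fin n) →* Module.End 𝕜 K,
      ∀ (i : ℕ) (hi : i + 1 < n),
        Φ (Equiv.swap ⟨i, Nat.lt_of_succ_lt hi⟩ ⟨i + 1, hi⟩) = DPlus 𝕜 K s i hi) :=
  DPlus_coxeter_relations_and_unique_action_general 𝕜 n K s hs
end
end
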